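/- The largest eigenvalue λ_{N−1} of the normalized graph Laplacian Δ satisfies 2·h̄ ≤ λ_{N−1} ≤ 1 + √(1 − (1 − h̄)²). -/

import Mathlib

open Finset

noncomputable section

namespace BJ

variable {V : Type*} [Fintype V] [DecidableEq V]

/-- The degree `d_i = ∑_j w_ij` of a vertex. -/
def deg (w : V → V → ℝ) (i : V) : ℝ := ∑ j, w i j

/-- The volume `vol(A) = ∑_{i ∈ A} d_i` of a vertex subset. -/
def vol (w : V → V → ℝ) (A : Finset V) : ℝ := ∑ i ∈ A, deg w i

/-- The total edge weight `|E(A,B)| = ∑_{i ∈ A, j ∈ B} w_ij` between two vertex subsets. -/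
def eW (w : V → V → ℝ) (A B : Finset V) : ℝ := ∑ i ∈ A, ∑ j ∈ B, w i j

/-- The normalized graph Laplacian `(Δu)(i) = u(i) - (1/d_i) ∑_j w_ij u(j)`. -/
def lap (w : V → V → ℝ) (u : V → ℝ) (i : V) : ℝ :=
  u i - (1 / deg w i) * ∑ j, w i j * u j

/-- `lam` is an eigenvalue of the normalized graph Laplacian. -/
def IsEigen (w : V → V → ℝ) (lam : ℝ) : Prop :=
  ∃ u : V → ℝ, u ≠ 0 ∧ ∀ i, lap w u i = lam * u i

/-- The weighted graph is connected: any two vertices are joined by a chain of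
positive-weight edges. -/
def Conn (w : V → V → ℝ) : Prop :=
  ∀ i j : V, Relation.ReflTransGen (fun a b => 0 < w a b) i j

/-- The weighted graph is bipartite: the vertex set splits into two nonempty classes with
no edges inside a class. -/
def Bipartite (w : V → V → ℝ) : Prop :=
  ∃ A : Finset V, A.Nonempty ∧ Aᶜ.Nonempty ∧
    (∀ i ∈ A, ∀ j ∈ A, w i j = 0) ∧ (∀ i ∈ Aᶜ, ∀ j ∈ Aᶜ, w i j = 0)

/-- The Cheeger constant
`h = min { |E(U,Uᶜ)| / vol(U) : ∅ ≠ U ⊊ V, vol(U) ≤ vol(V)/2 }`. -/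
def cheeger (w : V → V → ℝ) : ℝ :=
  sInf { r : ℝ | ∃ U : Finset V, U.Nonempty ∧ U ≠ Finset.univ ∧
    vol w U ≤ vol w Finset.univ / 2 ∧ r = eW w U Uᶜ / vol w U }

/-- The dual Cheeger constant
`h̄ = max { 2|E(V₁,V₂)| / (vol(V₁)+vol(V₂)) }` over pairs of disjoint nonempty vertex sets
`V₁, V₂` (the third class `V₃` of the partition being the complement of `V₁ ∪ V₂`). -/
def dualCheeger (w : V → V → ℝ) : ℝ :=
  sSup { r : ℝ | ∃ V1 V2 : Finset V, V1.Nonempty ∧ V2.Nonempty ∧ Disjoint V1 V2 ∧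
    r = 2 * eW w V1 V2 / (vol w V1 + vol w V2) }

/-- The weights of the neighborhood graph `Γ[l]`:
`w_ij[l] = ∑_{k₁,…,k_{l-1}} w_{i k₁} w_{k₁ k₂} ⋯ w_{k_{l-1} j} / (d_{k₁} ⋯ d_{k_{l-1}})`,
defined recursively (as a matrix, `wl w l = D ⬝ P^l`; in particular `wl w 1 = w`). -/
def wl (w : V → V → ℝ) : ℕ → V → V → ℝ
  | 0 => fun i j => if i = j then deg w i else 0
  | n + 1 => fun i j => ∑ k, wl w n i k * w k j / deg w k

/-! The eigenvalue equation `Δu = λu` reads `W u = (1 - λ) D u` with `W` the weight matrix and `D`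
the diagonal matrix of degrees, so `1 - λ_{N-1}` is the minimum of the Rayleigh quotient
`⟨u, W u⟩ / ⟨u, D u⟩`.

Testing it with `u = 1_{V₁} - 1_{V₂}` gives the lower bound on `λ_{N-1}`.

For the upper bound split an eigenfunction as `u = a - b` with `a = u⁺` and `b = u⁻`, and put
`M = ∑ w_ij min(a_i², b_j²)` and `S = ⟨u, D u⟩ = ∑ d_i (a_i² + b_i²)`. Integrating the defining
inequality of `h̄` over the superlevel sets of `a²` and `b²` yields `2M ≤ h̄ S`. Since
`a_i² b_j² = min(a_i², b_j²) max(a_i², b_j²)` and `min + max` sums to `S`, Cauchy–Schwarz gives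
`⟨a, W b⟩² ≤ M (S - M)`, hence `(2⟨a, W b⟩)² ≤ (1 - (1 - h̄)²) S²`, while
`(λ - 1) S = -⟨u, W u⟩ ≤ 2⟨a, W b⟩`.
-/

section Rayleigh

open Matrix
open scoped MatrixOrder

variable {n : Type*} [Fintype n] {A : Matrix n n ℝ} {c : ℝ}

lemma mul_dotProduct_self_le_of_forall_eigenvalue (hA : A.IsSymm)
    (hc : ∀ μ x, x ≠ 0 → A *ᵥ x = μ • x → c ≤ μ) (x : n → ℝ) :
    c * (x ⬝ᵥ x) ≤ x ⬝ᵥ A *ᵥ x := by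
  classical
  have c_le_A : algebraMap ℝ (Matrix n n ℝ) c ≤ A := by
    refine (algebraMap_le_iff_le_spectrum (isHermitian_iff_isSymm.2 hA)).2 fun μ hμ => ?_
    rw [← spectrum_toLin', ← Module.End.hasEigenvalue_iff_mem_spectrum] at hμ
    obtain ⟨v, hv⟩ := hμ.exists_hasEigenvector
    exact hc μ v hv.2 hv.apply_eq_smul
  have form_nonneg := (Matrix.le_iff.1 c_le_A).dotProduct_mulVec_nonneg x
  simpa [sub_mulVec, Algebra.algebraMap_eq_smul_one, smul_mulVec] using form_nonneg

lemma diagonal_mul_mul_diagonal_mulVec [DecidableEq n] (s : n → ℝ) (A : Matrix n n ℝ)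
    (x : n → ℝ) : (diagonal s * A * diagonal s) *ᵥ x = s * A *ᵥ (s * x) := by
  have diagonal_mulVec_eq (y : n → ℝ) : diagonal s *ᵥ y = s * y :=
    funext fun i => mulVec_diagonal s y i
  simp only [← mulVec_mulVec, diagonal_mulVec_eq]

lemma isSymm_diagonal_mul_mul_diagonal [DecidableEq n] (s : n → ℝ) (hA : A.IsSymm) :
    (diagonal s * A * diagonal s).IsSymm := by
  simp only [IsSymm, transpose_mul, diagonal_transpose, hA.eq, Matrix.mul_assoc]

lemma mul_sum_sq_le_of_forall_generalized_eigenvalue (hA : A.IsSymm) {d : n → ℝ}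
    (hd : ∀ i, 0 < d i) (hc : ∀ μ u, u ≠ 0 → A *ᵥ u = μ • (d * u) → c ≤ μ) (u : n → ℝ) :
    c * ∑ i, d i * u i ^ 2 ≤ u ⬝ᵥ A *ᵥ u := by
  classical
  set s : n → ℝ := fun i => √(d i)
  have s_ne_zero (i : n) : s i ≠ 0 := (Real.sqrt_pos.2 (hd i)).ne'
  have s_mul_self (i : n) : s i * s i = d i := Real.mul_self_sqrt (hd i).le
  set B : Matrix n n ℝ := diagonal s⁻¹ * A * diagonal s⁻¹
  have B_mulVec (x : n → ℝ) : B *ᵥ x = s⁻¹ * A *ᵥ (s⁻¹ * x) :=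
    diagonal_mul_mul_diagonal_mulVec s⁻¹ A x
  have eigenvalue_ge (μ : ℝ) (x : n → ℝ) (hx : x ≠ 0) (hμ : B *ᵥ x = μ • x) : c ≤ μ := by
    refine hc μ (s⁻¹ * x) (fun h => hx ?_) ?_
    · funext i
      simpa [s_ne_zero i] using congrFun h i
    · funext i
      have hi := congrFun hμ i
      simp only [B_mulVec, Pi.mul_apply, Pi.inv_apply, Pi.smul_apply, smul_eq_mul] at hi ⊢
      rw [inv_mul_eq_iff_eq_mul₀ (s_ne_zero i)] at hi
      rw [hi, ← s_mul_self i]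
      field_simp [s_ne_zero i]
  have s_inv_mul : s⁻¹ * (s * u) = u := funext fun i => inv_mul_cancel_left₀ (s_ne_zero i) (u i)
  calc c * ∑ i, d i * u i ^ 2 = c * ((s * u) ⬝ᵥ (s * u)) := by
        simp only [dotProduct, Pi.mul_apply, ← s_mul_self]
        congr! 2
        ring
    _ ≤ (s * u) ⬝ᵥ B *ᵥ (s * u) :=
        mul_dotProduct_self_le_of_forall_eigenvalue
          (isSymm_diagonal_mul_mul_diagonal s⁻¹ hA) eigenvalue_ge _
    _ = u ⬝ᵥ A *ᵥ u := by
        rw [B_mulVec, s_inv_mul]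
        refine sum_congr rfl fun i _ => ?_
        simp only [Pi.mul_apply, Pi.inv_apply]
        field_simp [s_ne_zero i]

end Rayleigh

section Superlevel

open MeasureTheory

variable {ι κ : Type*} [Fintype ι] [Fintype κ]

/-- The strict superlevel set `{f > t}`, over which the layer-cake formula integrates. -/
def superlevel (f : ι → ℝ) (t : ℝ) : Finset ι := {i | t < f i}

@[simp]
lemma mem_superlevel {f : ι → ℝ} {t : ℝ} {i : ι} : i ∈ superlevel f t ↔ t < f i := by
  simp [superlevel]

lemma superlevel_min (f : ι → ℝ) (g : κ → ℝ) (t : ℝ) :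
    superlevel (fun p : ι × κ => min (f p.1) (g p.2)) t = superlevel f t ×ˢ superlevel g t := by
  ext p
  simp

lemma disjoint_superlevel {f g : ι → ℝ} (hfg : ∀ i, f i = 0 ∨ g i = 0) {t : ℝ} (ht : 0 ≤ t) :
    Disjoint (superlevel f t) (superlevel g t) := by
  refine disjoint_left.2 fun i hf hg => ?_
  rw [mem_superlevel] at hf hg
  rcases hfg i with h | h <;> linarith

lemma superlevel_add [DecidableEq ι] {f g : ι → ℝ} (hfg : ∀ i, f i = 0 ∨ g i = 0) {t : ℝ}
    (ht : 0 ≤ t) : superlevel (f + g) t = superlevel f t ∪ superlevel g t := by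
  ext i
  rcases hfg i with h | h <;> simp [h, ht.not_gt]

lemma sum_superlevel_eq_sum_indicator (c y : ι → ℝ) {t : ℝ} (ht : 0 < t) :
    ∑ i ∈ superlevel y t, c i = ∑ i, (Set.Ioo 0 (y i)).indicator (fun _ => c i) t := by
  simp [superlevel, sum_filter, Set.indicator_apply, ht]

lemma integrable_indicator_Ioo (a c : ℝ) :
    Integrable ((Set.Ioo 0 a).indicator fun _ => c) (volume.restrict (Set.Ioi 0)) :=
  ((integrableOn_const (by simp)).integrable_indicator measurableSet_Ioo).integrableOn

lemma integrableOn_sum_superlevel (c y : ι → ℝ) :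
    IntegrableOn (fun t => ∑ i ∈ superlevel y t, c i) (Set.Ioi 0) :=
  IntegrableOn.congr_fun (integrable_finsetSum _ fun i _ => integrable_indicator_Ioo (y i) (c i))
    (fun _ ht => (sum_superlevel_eq_sum_indicator c y ht).symm) measurableSet_Ioi

lemma sum_mul_eq_integral_sum_superlevel (c : ι → ℝ) {y : ι → ℝ} (hy : ∀ i, 0 ≤ y i) :
    ∑ i, c i * y i = ∫ t in Set.Ioi 0, ∑ i ∈ superlevel y t, c i := by
  have integral_indicator_Ioo (i : ι) :
      ∫ t in Set.Ioi 0, (Set.Ioo 0 (y i)).indicator (fun _ => c i) t = c i * y i := by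
    rw [setIntegral_indicator measurableSet_Ioo,
      Set.inter_eq_right.2 Set.Ioo_subset_Ioi_self, setIntegral_const]
    simp [hy i, mul_comm]
  rw [setIntegral_congr_fun measurableSet_Ioi fun _ ht => sum_superlevel_eq_sum_indicator c y ht,
    integral_finsetSum _ fun i _ => integrable_indicator_Ioo (y i) (c i)]
  exact sum_congr rfl fun i _ => (integral_indicator_Ioo i).symm

lemma sum_mul_le_sum_mul_of_superlevel {a x : ι → ℝ} {b y : κ → ℝ} (hx : ∀ i, 0 ≤ x i)
    (hy : ∀ k, 0 ≤ y k)
    (h : ∀ t, 0 ≤ t → ∑ i ∈ superlevel x t, a i ≤ ∑ k ∈ superlevel y t, b k) :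
    ∑ i, a i * x i ≤ ∑ k, b k * y k := by
  rw [sum_mul_eq_integral_sum_superlevel a hx, sum_mul_eq_integral_sum_superlevel b hy]
  exact setIntegral_mono_on (integrableOn_sum_superlevel a x) (integrableOn_sum_superlevel b y)
    measurableSet_Ioi fun t ht => h t (le_of_lt ht)

end Superlevel

section WeightedGraph

open Matrix

omit [DecidableEq V]

variable {w : V → V → ℝ} {lam : ℝ}

omit [Fintype V] in
lemma eW_nonneg (hnn : ∀ i j, 0 ≤ w i j) (A B : Finset V) : 0 ≤ eW w A B :=
  sum_nonneg fun i _ => sum_nonneg fun j _ => hnn i j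

omit [Fintype V] in
lemma eW_comm (hsym : ∀ i j, w i j = w j i) (A B : Finset V) : eW w A B = eW w B A := by
  unfold eW
  rw [sum_comm]
  simp only [hsym]

omit [Fintype V] in
lemma eW_union_right [DecidableEq V] (C : Finset V) {A B : Finset V} (hAB : Disjoint A B) :
    eW w C (A ∪ B) = eW w C A + eW w C B := by
  simp only [eW, sum_union hAB, sum_add_distrib]

lemma eW_le_vol (hnn : ∀ i j, 0 ≤ w i j) (A B : Finset V) : eW w A B ≤ vol w A :=
  sum_le_sum fun i _ => sum_le_univ_sum_of_nonneg (hnn i)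

lemma vol_nonneg (hnn : ∀ i j, 0 ≤ w i j) (A : Finset V) : 0 ≤ vol w A :=
  sum_nonneg fun i _ => sum_nonneg fun j _ => hnn i j

lemma vol_pos (hdeg : ∀ i, 0 < deg w i) {A : Finset V} (hA : A.Nonempty) : 0 < vol w A :=
  sum_pos (fun i _ => hdeg i) hA

lemma vol_union [DecidableEq V] {A B : Finset V} (hAB : Disjoint A B) :
    vol w (A ∪ B) = vol w A + vol w B :=
  sum_union hAB

lemma dualCheeger_nonneg (hnn : ∀ i j, 0 ≤ w i j) : 0 ≤ dualCheeger w := by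
  refine Real.sSup_nonneg ?_
  rintro _ ⟨A, B, -, -, -, rfl⟩
  exact div_nonneg (mul_nonneg zero_le_two (eW_nonneg hnn A B))
    (add_nonneg (vol_nonneg hnn A) (vol_nonneg hnn B))

lemma dualCheeger_le_one (hsym : ∀ i j, w i j = w j i) (hnn : ∀ i j, 0 ≤ w i j) :
    dualCheeger w ≤ 1 := by
  refine Real.sSup_le ?_ zero_le_one
  rintro _ ⟨A, B, -, -, -, rfl⟩
  refine div_le_one_of_le₀ ?_ (add_nonneg (vol_nonneg hnn A) (vol_nonneg hnn B))
  linarith [eW_le_vol hnn A B, eW_le_vol hnn B A, eW_comm hsym A B]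

lemma two_mul_eW_le_dualCheeger_mul (hnn : ∀ i j, 0 ≤ w i j) (hdeg : ∀ i, 0 < deg w i)
    {A B : Finset V} (hAB : Disjoint A B) :
    2 * eW w A B ≤ dualCheeger w * (vol w A + vol w B) := by
  have rhs_nonneg : 0 ≤ dualCheeger w * (vol w A + vol w B) :=
    mul_nonneg (dualCheeger_nonneg hnn) (add_nonneg (vol_nonneg hnn A) (vol_nonneg hnn B))
  rcases A.eq_empty_or_nonempty with rfl | hA
  · simpa [eW] using rhs_nonneg
  rcases B.eq_empty_or_nonempty with rfl | hB
  · simpa [eW] using rhs_nonneg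
  rw [← div_le_iff₀ (add_pos (vol_pos hdeg hA) (vol_pos hdeg hB))]
  refine le_csSup (Set.Finite.bddAbove ?_) ⟨A, B, hA, hB, hAB, rfl⟩
  refine (Set.finite_range fun p : Finset V × Finset V =>
    2 * eW w p.1 p.2 / (vol w p.1 + vol w p.2)).subset ?_
  rintro _ ⟨A, B, -, -, -, rfl⟩
  exact ⟨(A, B), rfl⟩

lemma sum_deg_mul (w : V → V → ℝ) (f : V → ℝ) :
    ∑ i, deg w i * f i = ∑ i, ∑ j, w i j * f i := by
  simp only [deg, sum_mul]

lemma sum_deg_mul_right (hsym : ∀ i j, w i j = w j i) (f : V → ℝ) :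
    ∑ i, deg w i * f i = ∑ i, ∑ j, w i j * f j := by
  rw [sum_deg_mul, sum_comm]
  simp only [hsym]

/-- The bilinear form `⟨f, W g⟩ = ∑_{i,j} f_i w_ij g_j` of the weight matrix. It extends
`|E(A,B)|` from indicator functions to arbitrary functions. -/
def edgeForm (w : V → V → ℝ) (f g : V → ℝ) : ℝ := f ⬝ᵥ Matrix.of w *ᵥ g

lemma edgeForm_eq_sum (w : V → V → ℝ) (f g : V → ℝ) :
    edgeForm w f g = ∑ i, ∑ j, w i j * (f i * g j) := by
  simp only [edgeForm, dotProduct, mulVec, of_apply, mul_sum, mul_left_comm]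

lemma edgeForm_nonneg (hnn : ∀ i j, 0 ≤ w i j) {f g : V → ℝ} (hf : 0 ≤ f) (hg : 0 ≤ g) :
    0 ≤ edgeForm w f g := by
  rw [edgeForm_eq_sum]
  exact sum_nonneg fun i _ => sum_nonneg fun j _ => mul_nonneg (hnn i j) (mul_nonneg (hf i) (hg j))

lemma edgeForm_comm (hsym : ∀ i j, w i j = w j i) (f g : V → ℝ) :
    edgeForm w f g = edgeForm w g f := by
  simp only [edgeForm_eq_sum]
  rw [sum_comm]
  simp only [hsym, mul_comm]

lemma edgeForm_sub_self (hsym : ∀ i j, w i j = w j i) (f g : V → ℝ) :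
    edgeForm w (f - g) (f - g) = edgeForm w f f + edgeForm w g g - 2 * edgeForm w f g := by
  have expand : edgeForm w (f - g) (f - g) =
      edgeForm w f f - edgeForm w f g - (edgeForm w g f - edgeForm w g g) := by
    simp only [edgeForm, sub_dotProduct, mulVec_sub, dotProduct_sub]
    ring
  rw [expand, edgeForm_comm hsym g f]
  ring

lemma edgeForm_indicator (w : V → V → ℝ) (A B : Finset V) :
    edgeForm w ((A : Set V).indicator 1) ((B : Set V).indicator 1) = eW w A B := by
  classical
  simp [edgeForm, eW, dotProduct, mulVec, Set.indicator_apply]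

lemma isEigen_iff_exists_mulVec_eq (hdeg : ∀ i, 0 < deg w i) :
    IsEigen w lam ↔ ∃ u, u ≠ 0 ∧ Matrix.of w *ᵥ u = (1 - lam) • (deg w * u) := by
  simp only [IsEigen, funext_iff (f := Matrix.of w *ᵥ _)]
  refine exists_congr fun u => and_congr_right fun _ => forall_congr' fun i => ?_
  have deg_ne_zero := (hdeg i).ne'
  simp only [lap, mulVec, dotProduct, of_apply, Pi.smul_apply, Pi.mul_apply, smul_eq_mul]
  field_simp
  constructor <;> intro h <;> linarith

lemma one_sub_mul_sum_deg_le_edgeForm (hsym : ∀ i j, w i j = w j i) (hdeg : ∀ i, 0 < deg w i)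
    (hmax : ∀ μ, IsEigen w μ → μ ≤ lam) (u : V → ℝ) :
    (1 - lam) * ∑ i, deg w i * u i ^ 2 ≤ edgeForm w u u := by
  refine mul_sum_sq_le_of_forall_generalized_eigenvalue (Matrix.ext fun i j => hsym j i) hdeg
    (fun μ v hv hμ => ?_) u
  have one_sub_isEigen : IsEigen w (1 - μ) :=
    (isEigen_iff_exists_mulVec_eq hdeg).2 ⟨v, hv, by rwa [sub_sub_cancel]⟩
  linarith [hmax _ one_sub_isEigen]

lemma sum_deg_mul_indicator_sub_sq {A B : Finset V} (hAB : Disjoint A B) :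
    ∑ i, deg w i * ((A : Set V).indicator 1 - (B : Set V).indicator 1 : V → ℝ) i ^ 2 =
      vol w A + vol w B := by
  classical
  rw [← vol_union hAB, vol, ← sum_indicator_subset _ (subset_univ (A ∪ B))]
  refine sum_congr rfl fun i _ => ?_
  have not_mem_both : i ∈ A → i ∉ B := fun hA => disjoint_left.1 hAB hA
  by_cases hA : i ∈ A <;> by_cases hB : i ∈ B <;> simp_all

lemma four_mul_eW_le_mul_vol (hsym : ∀ i j, w i j = w j i) (hnn : ∀ i j, 0 ≤ w i j)
    (hdeg : ∀ i, 0 < deg w i) (hmax : ∀ μ, IsEigen w μ → μ ≤ lam) {A B : Finset V}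
    (hAB : Disjoint A B) : 4 * eW w A B ≤ lam * (vol w A + vol w B) := by
  classical
  have rayleigh := one_sub_mul_sum_deg_le_edgeForm hsym hdeg hmax
    ((A : Set V).indicator 1 - (B : Set V).indicator 1)
  rw [sum_deg_mul_indicator_sub_sq hAB, edgeForm_sub_self hsym] at rayleigh
  simp only [edgeForm_indicator] at rayleigh
  have eW_add_eW_le_vol (C : Finset V) : eW w C A + eW w C B ≤ vol w C :=
    eW_union_right C hAB ▸ eW_le_vol hnn C (A ∪ B)
  linarith [eW_add_eW_le_vol A, eW_add_eW_le_vol B, eW_comm hsym A B]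

lemma two_mul_dualCheeger_le [Nontrivial V] (hsym : ∀ i j, w i j = w j i)
    (hnn : ∀ i j, 0 ≤ w i j) (hdeg : ∀ i, 0 < deg w i) (hmax : ∀ μ, IsEigen w μ → μ ≤ lam) :
    2 * dualCheeger w ≤ lam := by
  rw [← le_div_iff₀' zero_lt_two]
  refine csSup_le ?_ ?_
  · obtain ⟨i, j, hij⟩ := exists_pair_ne V
    exact ⟨_, {i}, {j}, singleton_nonempty i, singleton_nonempty j, by simpa using hij, rfl⟩
  · rintro _ ⟨A, B, hA, hB, hAB, rfl⟩
    rw [div_le_iff₀ (add_pos (vol_pos hdeg hA) (vol_pos hdeg hB))]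
    linarith [four_mul_eW_le_mul_vol hsym hnn hdeg hmax hAB]

/-- The sum `∑_{i,j} w_ij min(f_i, g_j)`, which for nonnegative `f` and `g` is the integral of
`|E({f > t}, {g > t})|` over `t > 0`. -/
def edgeMin (w : V → V → ℝ) (f g : V → ℝ) : ℝ := ∑ i, ∑ j, w i j * min (f i) (g j)

lemma two_mul_edgeMin_le_dualCheeger_mul (hnn : ∀ i j, 0 ≤ w i j) (hdeg : ∀ i, 0 < deg w i)
    {f g : V → ℝ} (hf : ∀ i, 0 ≤ f i) (hg : ∀ i, 0 ≤ g i) (hfg : ∀ i, f i = 0 ∨ g i = 0) :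
    2 * edgeMin w f g ≤ dualCheeger w * ∑ i, deg w i * (f i + g i) := by
  classical
  have layer_le (t : ℝ) (ht : 0 ≤ t) :
      ∑ p ∈ superlevel (fun p : V × V => min (f p.1) (g p.2)) t, 2 * w p.1 p.2 ≤
        ∑ i ∈ superlevel (f + g) t, dualCheeger w * deg w i := by
    have level_disjoint := disjoint_superlevel hfg ht
    rw [superlevel_min, superlevel_add hfg ht, ← mul_sum, ← mul_sum, sum_product]
    exact (two_mul_eW_le_dualCheeger_mul hnn hdeg level_disjoint).trans_eq
      (congrArg _ (vol_union level_disjoint).symm)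
  have integrated := sum_mul_le_sum_mul_of_superlevel (fun p : V × V => le_min (hf p.1) (hg p.2))
    (fun i => add_nonneg (hf i) (hg i)) layer_le
  simpa only [edgeMin, Fintype.sum_prod_type, mul_assoc, ← mul_sum, Pi.add_apply] using integrated

lemma edgeForm_sq_le_edgeMin_mul (hsym : ∀ i j, w i j = w j i) (hnn : ∀ i j, 0 ≤ w i j)
    (a b : V → ℝ) :
    edgeForm w a b ^ 2 ≤ edgeMin w (a ^ 2) (b ^ 2) *
      (∑ i, deg w i * (a i ^ 2 + b i ^ 2) - edgeMin w (a ^ 2) (b ^ 2)) := by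
  have sum_max : ∑ i, ∑ j, w i j * max (a i ^ 2) (b j ^ 2) =
      ∑ i, deg w i * (a i ^ 2 + b i ^ 2) - edgeMin w (a ^ 2) (b ^ 2) := by
    rw [eq_sub_iff_add_eq']
    simp only [edgeMin, Pi.pow_apply, ← sum_add_distrib, ← mul_add, min_add_max]
    simp only [mul_add, sum_add_distrib, sum_deg_mul w fun i => a i ^ 2,
      sum_deg_mul_right hsym fun i => b i ^ 2]
  rw [← sum_max, edgeForm_eq_sum, edgeMin]
  simp only [← Fintype.sum_prod_type']
  refine sum_sq_le_sum_mul_sum_of_sq_le_mul _ (fun p _ => ?_) (fun p _ => ?_) (fun p _ => ?_)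
  · exact mul_nonneg (hnn _ _) (le_min (sq_nonneg _) (sq_nonneg _))
  · exact mul_nonneg (hnn _ _) (le_max_of_le_left (sq_nonneg _))
  · rw [mul_mul_mul_comm, Pi.pow_apply, Pi.pow_apply, min_mul_max, mul_pow, mul_pow, ← sq]

lemma two_mul_edgeForm_le_sqrt_mul (hsym : ∀ i j, w i j = w j i) (hnn : ∀ i j, 0 ≤ w i j)
    (hdeg : ∀ i, 0 < deg w i) {a b : V → ℝ} (hab : ∀ i, a i = 0 ∨ b i = 0) :
    2 * edgeForm w a b ≤
      √(1 - (1 - dualCheeger w) ^ 2) * ∑ i, deg w i * (a i ^ 2 + b i ^ 2) := by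
  have cauchy_schwarz := edgeForm_sq_le_edgeMin_mul hsym hnn a b
  have coarea : 2 * edgeMin w (a ^ 2) (b ^ 2) ≤
      dualCheeger w * ∑ i, deg w i * (a i ^ 2 + b i ^ 2) :=
    two_mul_edgeMin_le_dualCheeger_mul hnn hdeg (fun i => sq_nonneg (a i))
      (fun i => sq_nonneg (b i)) fun i => (hab i).imp (by simp [·]) (by simp [·])
  have S_nonneg : 0 ≤ ∑ i, deg w i * (a i ^ 2 + b i ^ 2) :=
    sum_nonneg fun i _ => mul_nonneg (hdeg i).le (by positivity)
  set h := dualCheeger w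
  set M := edgeMin w (a ^ 2) (b ^ 2)
  set S := ∑ i, deg w i * (a i ^ 2 + b i ^ 2)
  have h_mul_S_le : h * S ≤ S := mul_le_of_le_one_left S_nonneg (dualCheeger_le_one hsym hnn)
  have sq_le : (2 * edgeForm w a b) ^ 2 ≤ (1 - (1 - h) ^ 2) * S ^ 2 := by
    -- `M ↦ M (S - M)` increases up to `S / 2`, and `M ≤ h S / 2 ≤ S / 2`.
    have monotone_gap : 0 ≤ (h * S - 2 * M) * (2 * S - h * S - 2 * M) :=
      mul_nonneg (by linarith) (by linarith)
    linarith
  calc 2 * edgeForm w a b ≤ √((1 - (1 - h) ^ 2) * S ^ 2) := Real.le_sqrt_of_sq_le sq_le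
    _ = √(1 - (1 - h) ^ 2) * S := by rw [Real.sqrt_mul' _ (sq_nonneg S), Real.sqrt_sq S_nonneg]

lemma IsEigen.le_one_add_sqrt (hlam : IsEigen w lam) (hsym : ∀ i j, w i j = w j i)
    (hnn : ∀ i j, 0 ≤ w i j) (hdeg : ∀ i, 0 < deg w i) :
    lam ≤ 1 + √(1 - (1 - dualCheeger w) ^ 2) := by
  obtain ⟨u, u_ne_zero, hu⟩ := (isEigen_iff_exists_mulVec_eq hdeg).1 hlam
  have normSq_pos : 0 < ∑ i, deg w i * u i ^ 2 := by
    obtain ⟨i, hi⟩ := Function.ne_iff.1 u_ne_zero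
    exact sum_pos' (fun j _ => mul_nonneg (hdeg j).le (sq_nonneg _))
      ⟨i, mem_univ i, mul_pos (hdeg i) (sq_pos_of_ne_zero hi)⟩
  have edgeForm_self : edgeForm w u u = (1 - lam) * ∑ i, deg w i * u i ^ 2 := by
    rw [edgeForm, hu, dotProduct_smul, smul_eq_mul]
    congr 1
    exact sum_congr rfl fun i _ => by rw [Pi.mul_apply]; ring
  have neg_edgeForm_le : -edgeForm w u u ≤ 2 * edgeForm w u⁺ u⁻ := by
    nth_rw 1 2 [← posPart_sub_negPart u]
    rw [edgeForm_sub_self hsym]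
    linarith [edgeForm_nonneg hnn (posPart_nonneg u) (posPart_nonneg u),
      edgeForm_nonneg hnn (negPart_nonneg u) (negPart_nonneg u)]
  have posPart_or_negPart (i : V) : u⁺ i = 0 ∨ u⁻ i = 0 :=
    (le_total (u i) 0).imp posPart_of_nonpos negPart_of_nonneg
  have sq_eq (i : V) : u i ^ 2 = u⁺ i ^ 2 + u⁻ i ^ 2 := by
    nth_rw 1 [← posPart_sub_negPart u]
    rcases posPart_or_negPart i with h | h <;> simp [-Pi.posPart_apply, -Pi.negPart_apply, h]
  have cross_le := two_mul_edgeForm_le_sqrt_mul hsym hnn hdeg posPart_or_negPart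
  simp only [← sq_eq] at cross_le
  have lam_sub_one_le : lam - 1 ≤ √(1 - (1 - dualCheeger w) ^ 2) :=
    le_of_mul_le_mul_right (by linarith) normSq_pos
  linarith

theorem dual_cheeger_inequality_general
    (hsym : ∀ i j, w i j = w j i) (hnn : ∀ i j, 0 ≤ w i j)
    (hdeg : ∀ i, 0 < deg w i) (hN : 2 ≤ Fintype.card V)
    (hlam : IsEigen w lam) (hmax : ∀ μ, IsEigen w μ → μ ≤ lam) :
    2 * dualCheeger w ≤ lam ∧ lam ≤ 1 + √(1 - (1 - dualCheeger w) ^ 2) := by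
  have : Nontrivial V := Fintype.one_lt_card_iff_nontrivial.1 hN
  exact ⟨two_mul_dualCheeger_le hsym hnn hdeg hmax, hlam.le_one_add_sqrt hsym hnn hdeg⟩

end WeightedGraph

/-- Theorem: dual Cheeger inequality.
The largest eigenvalue `λ_{N-1}` of the normalized Laplacian satisfies
`2 h̄ ≤ λ_{N-1} ≤ 1 + √(1 - (1 - h̄)²)`. -/
theorem dual_cheeger_inequality
    (w : V → V → ℝ)
    (hsym : ∀ i j, w i j = w j i) (hnn : ∀ i j, 0 ≤ w i j)
    (hdeg : ∀ i, 0 < deg w i) (hconn : Conn w) (hN : 2 ≤ Fintype.card V)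
    (lam : ℝ) (hlam : IsEigen w lam) (hmax : ∀ μ, IsEigen w μ → μ ≤ lam) :
    2 * dualCheeger w ≤ lam ∧
      lam ≤ 1 + Real.sqrt (1 - (1 - dualCheeger w) ^ 2) := by
  exact dual_cheeger_inequality_general hsym hnn hdeg hN hlam hmax

end BJ
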